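/- arXiv:2208.02126 — 8 statements merged into one kernel-verified Lean document; each statement's English description precedes it below -/
import Mathlib

section
/- Let (Ω, P) be a probability space, let X be a random feature vector, Y a {0,1}-valued random label, and let ε be a {0,1}-valued random variable independent of the pair (X, Y) with P(ε = 1) = γ for some γ ∈ [0,1]. Define the noisy label Ỹ = εY + (1−ε)(1−Y). Then for any measurable loss ℓ : ℝ → ℝ and any measurable scorer f such that ℓ(f(X)(2Y−1)) and ℓ(−f(X)(2Y−1)) are integrable, the noisy pointwise risk decomposes as E[ℓ(f(X)(2Ỹ−1))] = γ·E[ℓ(f(X)(2Y−1))] + (1−γ)·E[ℓ(−f(X)(2Y−1))]. -/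
open MeasureTheory ProbabilityTheory

/-- Under class-conditional label noise `Ỹ = εY + (1-ε)(1-Y)` with `ε`
a `{0,1}`-valued random variable independent of `(X, Y)` and `P(ε = 1) = γ`,
the noisy pointwise risk decomposes as
`E[ℓ(f(X)(2Ỹ-1))] = γ E[ℓ(f(X)(2Y-1))] + (1-γ) E[ℓ(-f(X)(2Y-1))]`. -/
theorem noisy_pointwise_risk_decomposition
    {Ω : Type*} [MeasurableSpace Ω] (P : Measure Ω) [IsProbabilityMeasure P]
    {𝒳 : Type*} [MeasurableSpace 𝒳]
    (X : Ω → 𝒳) (Y e : Ω → ℝ) (γ : ℝ)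
    (hX : Measurable X) (hY : Measurable Y) (he : Measurable e)
    (hYval : ∀ ω, Y ω = 0 ∨ Y ω = 1)
    (heval : ∀ ω, e ω = 0 ∨ e ω = 1)
    (hγ : γ ∈ Set.Icc (0 : ℝ) 1)
    (hindep : IndepFun (fun ω => (X ω, Y ω)) e P)
    (heγ : P {ω | e ω = 1} = ENNReal.ofReal γ)
    (ℓ : ℝ → ℝ) (f : 𝒳 → ℝ) (hℓ : Measurable ℓ) (hf : Measurable f)
    (hint : Integrable (fun ω => ℓ (f (X ω) * (2 * Y ω - 1))) P)
    (hint' : Integrable (fun ω => ℓ (-(f (X ω) * (2 * Y ω - 1)))) P) :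
    ∫ ω, ℓ (f (X ω) * (2 * (e ω * Y ω + (1 - e ω) * (1 - Y ω)) - 1)) ∂P
      = γ * ∫ ω, ℓ (f (X ω) * (2 * Y ω - 1)) ∂P
        + (1 - γ) * ∫ ω, ℓ (-(f (X ω) * (2 * Y ω - 1))) ∂P := by
  have hes : MeasurableSet {ω | e ω = 1} := he (measurableSet_singleton 1)
  have heind : e = Set.indicator {ω | e ω = 1} (fun _ => (1 : ℝ)) := by
    funext ω
    by_cases h : e ω = 1
    · simp [Set.indicator, h]
    · have h0 := (heval ω).resolve_right h
      simp [Set.indicator, h0]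
  have heint : Integrable e P := by
    rw [heind]
    exact (integrable_const (1 : ℝ)).indicator hes
  have hE : ∫ ω, e ω ∂P = γ := by
    have h1 : ∫ ω, e ω ∂P = ∫ ω, Set.indicator {ω | e ω = 1} (fun _ => (1 : ℝ)) ω ∂P :=
      congrArg (fun g : Ω → ℝ => ∫ ω, g ω ∂P) heind
    rw [h1, integral_indicator_const _ hes, measureReal_def, heγ,
      ENNReal.toReal_ofReal hγ.1]
    simp
  have hA : IndepFun (fun ω => ℓ (f (X ω) * (2 * Y ω - 1))) e P :=
    hindep.comp (φ := fun p : 𝒳 × ℝ => ℓ (f p.1 * (2 * p.2 - 1))) (ψ := id)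
      (by fun_prop) measurable_id
  have hB : IndepFun (fun ω => ℓ (-(f (X ω) * (2 * Y ω - 1)))) (fun ω => 1 - e ω) P :=
    hindep.comp (φ := fun p : 𝒳 × ℝ => ℓ (-(f p.1 * (2 * p.2 - 1)))) (ψ := fun x => 1 - x)
      (by fun_prop) (by fun_prop)
  have heint' : Integrable (fun ω => 1 - e ω) P := (integrable_const (1 : ℝ)).sub heint
  have hE' : ∫ ω, (1 - e ω) ∂P = 1 - γ := by
    rw [integral_sub (integrable_const _) heint, hE]
    simp
  have hsplit : ∀ ω, ℓ (f (X ω) * (2 * (e ω * Y ω + (1 - e ω) * (1 - Y ω)) - 1))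
      = ℓ (f (X ω) * (2 * Y ω - 1)) * e ω
        + ℓ (-(f (X ω) * (2 * Y ω - 1))) * (1 - e ω) := by
    intro ω
    rcases heval ω with h | h
    · rw [h]
      simp only [mul_zero, sub_zero, mul_one, zero_add]
      congr 1
      ring
    · rw [h]
      simp
  simp_rw [hsplit]
  have i1 : Integrable (fun ω => ℓ (f (X ω) * (2 * Y ω - 1)) * e ω) P :=
    hA.integrable_mul hint heint
  have i2 : Integrable (fun ω => ℓ (-(f (X ω) * (2 * Y ω - 1))) * (1 - e ω)) P :=
    hB.integrable_mul hint' heint'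
  rw [integral_add i1 i2,
    hA.integral_fun_mul_eq_mul_integral hint.aestronglyMeasurable heint.aestronglyMeasurable,
    hB.integral_fun_mul_eq_mul_integral hint'.aestronglyMeasurable heint'.aestronglyMeasurable,
    hE, hE']
  ring
end

section
/- Let (Ω, P) be a probability space, X a random feature vector, Y a {0,1}-valued random label, and ε a {0,1}-valued random variable independent of (X, Y) with P(ε = 1) = γ. Define Ỹ = εY + (1−ε)(1−Y). Let ℓ : ℝ → ℝ be a label-symmetric loss with constant c (i.e., ℓ(α) + ℓ(−α) = c for all α ≠ 0). Let f be a measurable scorer with f(X) ≠ 0 almost surely and with ℓ(f(X)(2Y−1)) integrable. Then the noisy pointwise risk is an affine transform of the clean risk: L̃(f) = (2γ−1)·L(f) + c(1−γ). -/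
open MeasureTheory ProbabilityTheory

/-- For a label-symmetric loss `ℓ` (with `ℓ(α) + ℓ(-α) = c` for all `α ≠ 0`),
under class-conditional label noise `Ỹ = εY + (1-ε)(1-Y)` with `ε ⟂ (X,Y)` and `P(ε=1) = γ`,
and a scorer `f` with `f(X) ≠ 0` a.s., the noisy pointwise risk is an affine transform of
the clean risk: `L̃(f) = (2γ-1) L(f) + c (1-γ)`. -/
theorem label_symmetric_noisy_risk_affine
    {Ω : Type*} [MeasurableSpace Ω] (P : Measure Ω) [IsProbabilityMeasure P]
    {𝒳 : Type*} [MeasurableSpace 𝒳]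
    (X : Ω → 𝒳) (Y e : Ω → ℝ) (γ : ℝ)
    (hX : Measurable X) (hY : Measurable Y) (he : Measurable e)
    (hYval : ∀ ω, Y ω = 0 ∨ Y ω = 1)
    (heval : ∀ ω, e ω = 0 ∨ e ω = 1)
    (hγ : γ ∈ Set.Icc (0 : ℝ) 1)
    (hindep : IndepFun (fun ω => (X ω, Y ω)) e P)
    (heγ : P {ω | e ω = 1} = ENNReal.ofReal γ)
    (ℓ : ℝ → ℝ) (c : ℝ) (hsym : ∀ α : ℝ, α ≠ 0 → ℓ α + ℓ (-α) = c)
    (f : 𝒳 → ℝ) (hℓ : Measurable ℓ) (hf : Measurable f)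
    (hf0 : ∀ᵐ ω ∂P, f (X ω) ≠ 0)
    (hint : Integrable (fun ω => ℓ (f (X ω) * (2 * Y ω - 1))) P) :
    ∫ ω, ℓ (f (X ω) * (2 * (e ω * Y ω + (1 - e ω) * (1 - Y ω)) - 1)) ∂P
      = (2 * γ - 1) * ∫ ω, ℓ (f (X ω) * (2 * Y ω - 1)) ∂P + c * (1 - γ) := by
  have hind : IndepFun (fun ω => ℓ (f (X ω) * (2 * Y ω - 1))) e P :=
    hindep.comp (φ := fun p : 𝒳 × ℝ => ℓ (f p.1 * (2 * p.2 - 1))) (ψ := id)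
      (by fun_prop) measurable_id
  have heint : Integrable e P := by
    refine Integrable.of_bound he.aestronglyMeasurable 1 (Filter.Eventually.of_forall fun ω => ?_)
    rcases heval ω with h | h <;> simp [h]
  have hse : MeasurableSet {ω | e ω = 1} := he (measurableSet_singleton 1)
  have hEe : ∫ ω, e ω ∂P = γ := by
    have h1 : e = Set.indicator {ω | e ω = 1} (fun _ => (1 : ℝ)) := by
      funext ω
      rcases heval ω with h | h <;> simp [Set.indicator, h]
    have h2 : ∫ ω, e ω ∂P = ∫ ω, Set.indicator {ω | e ω = 1} (fun _ => (1 : ℝ)) ω ∂P :=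
      congrArg (fun u : Ω → ℝ => ∫ ω, u ω ∂P) h1
    rw [h2, integral_indicator_const _ hse, measureReal_def, heγ, ENNReal.toReal_ofReal hγ.1]
    simp
  have hmul : ∫ ω, ℓ (f (X ω) * (2 * Y ω - 1)) * e ω ∂P
      = (∫ ω, ℓ (f (X ω) * (2 * Y ω - 1)) ∂P) * ∫ ω, e ω ∂P :=
    hind.integral_fun_mul_eq_mul_integral hint.aestronglyMeasurable heint.aestronglyMeasurable
  have hgint : Integrable (fun ω => ℓ (f (X ω) * (2 * Y ω - 1)) * e ω) P :=
    hind.integrable_mul hint heint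
  have hae : ∀ᵐ ω ∂P, ℓ (f (X ω) * (2 * (e ω * Y ω + (1 - e ω) * (1 - Y ω)) - 1))
      = (2 * (ℓ (f (X ω) * (2 * Y ω - 1)) * e ω) - ℓ (f (X ω) * (2 * Y ω - 1)))
        + (c - c * e ω) := by
    filter_upwards [hf0] with ω hω
    have hs := hsym _ hω
    rcases heval ω with h | h <;> rcases hYval ω with h' | h' <;> norm_num [h, h'] <;> linarith
  have hA : Integrable (fun ω => 2 * (ℓ (f (X ω) * (2 * Y ω - 1)) * e ω)
      - ℓ (f (X ω) * (2 * Y ω - 1))) P := (hgint.const_mul 2).sub hint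
  have hB : Integrable (fun ω => c - c * e ω) P :=
    (integrable_const c).sub (heint.const_mul c)
  rw [integral_congr_ae hae, integral_add hA hB, integral_sub (hgint.const_mul 2) hint,
    integral_sub (integrable_const c) (heint.const_mul c), integral_const_mul,
    integral_const_mul, hmul, hEe]
  simp
  ring
end

section
/- Let (Ω, P) be a probability space, X a random feature vector, Y a {0,1}-valued random label, and ε a {0,1}-valued random variable independent of (X, Y) with P(ε = 1) = γ. Define Ỹ = εY + (1−ε)(1−Y). Let ℓ : ℝ → ℝ be a label-symmetric loss with constant c. Then for any two measurable scorers f, g satisfying f(X) ≠ 0 and g(X) ≠ 0 almost surely and with ℓ(f(X)(2Y−1)) and ℓ(g(X)(2Y−1)) integrable, the order-preservation identity holds: L̃(f) − L̃(g) = (2γ−1)·(L(f) − L(g)). -/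
open MeasureTheory ProbabilityTheory

/-- The noisy risk of a single scorer in terms of the clean risk. -/
theorem noisy_risk_eq
    {Ω : Type*} [MeasurableSpace Ω] (P : Measure Ω) [IsProbabilityMeasure P]
    {𝒳 : Type*} [MeasurableSpace 𝒳]
    (X : Ω → 𝒳) (Y e : Ω → ℝ) (γ : ℝ)
    (he : Measurable e)
    (hYval : ∀ ω, Y ω = 0 ∨ Y ω = 1)
    (heval : ∀ ω, e ω = 0 ∨ e ω = 1)
    (hγ : γ ∈ Set.Icc (0 : ℝ) 1)
    (hindep : IndepFun (fun ω => (X ω, Y ω)) e P)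
    (heγ : P {ω | e ω = 1} = ENNReal.ofReal γ)
    (ℓ : ℝ → ℝ) (c : ℝ) (hsym : ∀ α : ℝ, α ≠ 0 → ℓ α + ℓ (-α) = c)
    (f : 𝒳 → ℝ) (hℓ : Measurable ℓ) (hf : Measurable f)
    (hf0 : ∀ᵐ ω ∂P, f (X ω) ≠ 0)
    (hintf : Integrable (fun ω => ℓ (f (X ω) * (2 * Y ω - 1))) P) :
    (∫ ω, ℓ (f (X ω) * (2 * (e ω * Y ω + (1 - e ω) * (1 - Y ω)) - 1)) ∂P)
      = (2 * γ - 1) * (∫ ω, ℓ (f (X ω) * (2 * Y ω - 1)) ∂P) + c * (1 - γ) := by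
  have hm : MeasurableSet {ω | e ω = 1} := he (measurableSet_singleton 1)
  have heind : e = Set.indicator {ω | e ω = 1} (fun _ => (1 : ℝ)) := by
    funext ω
    rcases heval ω with h | h <;> simp [Set.indicator, h]
  have hie : Integrable e P := by
    rw [heind]
    exact (integrable_const 1).indicator hm
  have hEe : ∫ ω, e ω ∂P = γ := by
    rw [heind, integral_indicator hm]
    simp [measureReal_def, heγ, hγ.1]
  have hi2 : Integrable (fun ω => 2 * e ω - 1) P := (hie.const_mul 2).sub (integrable_const 1)
  have hE2 : ∫ ω, (2 * e ω - 1) ∂P = 2 * γ - 1 := by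
    rw [integral_sub (hie.const_mul 2) (integrable_const 1), integral_const_mul, hEe]
    simp
  have hE3 : ∫ ω, c * (1 - e ω) ∂P = c * (1 - γ) := by
    rw [integral_const_mul, integral_sub (integrable_const 1) hie, hEe]
    simp
  have hind : IndepFun (fun ω => ℓ (f (X ω) * (2 * Y ω - 1))) (fun ω => 2 * e ω - 1) P :=
    hindep.comp (φ := fun p : 𝒳 × ℝ => ℓ (f p.1 * (2 * p.2 - 1))) (ψ := fun x : ℝ => 2 * x - 1)
      (by fun_prop) (by fun_prop)
  have hae : (fun ω => ℓ (f (X ω) * (2 * (e ω * Y ω + (1 - e ω) * (1 - Y ω)) - 1))) =ᵐ[P]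
      fun ω => ℓ (f (X ω) * (2 * Y ω - 1)) * (2 * e ω - 1) + c * (1 - e ω) := by
    filter_upwards [hf0] with ω h0
    have hs := hsym _ h0
    rcases hYval ω with hy | hy <;> rcases heval ω with h | h <;> rw [hy, h] <;> norm_num <;>
      linarith
  have hprod : Integrable (fun ω => ℓ (f (X ω) * (2 * Y ω - 1)) * (2 * e ω - 1)) P :=
    hind.integrable_mul hintf hi2
  have hi3 : Integrable (fun ω => c * (1 - e ω)) P :=
    ((integrable_const 1).sub hie).const_mul c
  rw [integral_congr_ae hae,
    integral_add hprod hi3, hE3,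
    hind.integral_fun_mul_eq_mul_integral hintf.aestronglyMeasurable hi2.aestronglyMeasurable, hE2]
  ring

/-- For a label-symmetric loss `ℓ` under class-conditional label noise,
the order-preservation identity holds for pointwise risks of any two scorers `f, g`
with nonzero scores a.s.: `L̃(f) - L̃(g) = (2γ-1)(L(f) - L(g))`. -/
theorem label_symmetric_order_preserving_pointwise
    {Ω : Type*} [MeasurableSpace Ω] (P : Measure Ω) [IsProbabilityMeasure P]
    {𝒳 : Type*} [MeasurableSpace 𝒳]
    (X : Ω → 𝒳) (Y e : Ω → ℝ) (γ : ℝ)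
    (hX : Measurable X) (hY : Measurable Y) (he : Measurable e)
    (hYval : ∀ ω, Y ω = 0 ∨ Y ω = 1)
    (heval : ∀ ω, e ω = 0 ∨ e ω = 1)
    (hγ : γ ∈ Set.Icc (0 : ℝ) 1)
    (hindep : IndepFun (fun ω => (X ω, Y ω)) e P)
    (heγ : P {ω | e ω = 1} = ENNReal.ofReal γ)
    (ℓ : ℝ → ℝ) (c : ℝ) (hsym : ∀ α : ℝ, α ≠ 0 → ℓ α + ℓ (-α) = c)
    (f g : 𝒳 → ℝ) (hℓ : Measurable ℓ) (hf : Measurable f) (hg : Measurable g)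
    (hf0 : ∀ᵐ ω ∂P, f (X ω) ≠ 0) (hg0 : ∀ᵐ ω ∂P, g (X ω) ≠ 0)
    (hintf : Integrable (fun ω => ℓ (f (X ω) * (2 * Y ω - 1))) P)
    (hintg : Integrable (fun ω => ℓ (g (X ω) * (2 * Y ω - 1))) P) :
    (∫ ω, ℓ (f (X ω) * (2 * (e ω * Y ω + (1 - e ω) * (1 - Y ω)) - 1)) ∂P)
      - (∫ ω, ℓ (g (X ω) * (2 * (e ω * Y ω + (1 - e ω) * (1 - Y ω)) - 1)) ∂P)
      = (2 * γ - 1)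
        * ((∫ ω, ℓ (f (X ω) * (2 * Y ω - 1)) ∂P)
            - (∫ ω, ℓ (g (X ω) * (2 * Y ω - 1)) ∂P)) := by
  rw [noisy_risk_eq P X Y e γ he hYval heval hγ hindep heγ ℓ c hsym f hℓ hf hf0 hintf,
    noisy_risk_eq P X Y e γ he hYval heval hγ hindep heγ ℓ c hsym g hℓ hg hg0 hintg]
  ring
end

section
/- Let (X₁, Y₁) and (X₂, Y₂) be i.i.d. random pairs with {0,1}-valued labels, let ℓ : ℝ → ℝ be a label-symmetric loss with constant c, let f be a measurable scorer, and fix y ∈ {0,1} with P(Y₁ = y) > 0. Assume that conditioned on the event {Y₁ = y, Y₂ = y}, ties occur with probability zero, i.e., P(f(X₁) = f(X₂) | Y₁ = y, Y₂ = y) = 0, and that ℓ(f(X₁) − f(X₂)) is integrable on this event. Then E[ℓ(f(X₁) − f(X₂)) | Y₁ = y, Y₂ = y] = c/2. -/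
open MeasureTheory ProbabilityTheory

/-- For i.i.d. pairs `(X₁,Y₁)`, `(X₂,Y₂)`, a label-symmetric loss `ℓ`
(with constant `c`) and a scorer `f` with no ties on the event `{Y₁ = y, Y₂ = y}`
(for `y ∈ {0,1}` with `P(Y₁ = y) > 0`), the conditional pairwise risk on same-label
pairs is `E[ℓ(f(X₁) - f(X₂)) | Y₁ = y, Y₂ = y] = c/2`. -/
theorem pairwise_same_label_conditional_risk
    {Ω : Type*} [MeasurableSpace Ω] (P : Measure Ω) [IsProbabilityMeasure P]
    {𝒳 : Type*} [MeasurableSpace 𝒳]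
    (X₁ X₂ : Ω → 𝒳) (Y₁ Y₂ : Ω → ℝ)
    (hX₁ : Measurable X₁) (hX₂ : Measurable X₂)
    (hY₁ : Measurable Y₁) (hY₂ : Measurable Y₂)
    (hY₁val : ∀ ω, Y₁ ω = 0 ∨ Y₁ ω = 1)
    (hY₂val : ∀ ω, Y₂ ω = 0 ∨ Y₂ ω = 1)
    (hindep : IndepFun (fun ω => (X₁ ω, Y₁ ω)) (fun ω => (X₂ ω, Y₂ ω)) P)
    (hid : IdentDistrib (fun ω => (X₁ ω, Y₁ ω)) (fun ω => (X₂ ω, Y₂ ω)) P P)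
    (ℓ : ℝ → ℝ) (c : ℝ) (hsym : ∀ α : ℝ, α ≠ 0 → ℓ α + ℓ (-α) = c)
    (f : 𝒳 → ℝ) (hℓ : Measurable ℓ) (hf : Measurable f)
    (y : ℝ) (hy : y = 0 ∨ y = 1)
    (hpos : 0 < P {ω | Y₁ ω = y})
    (hties : P ({ω | f (X₁ ω) = f (X₂ ω)} ∩ {ω | Y₁ ω = y ∧ Y₂ ω = y}) = 0)
    (hint : IntegrableOn (fun ω => ℓ (f (X₁ ω) - f (X₂ ω)))
      {ω | Y₁ ω = y ∧ Y₂ ω = y} P) :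
    (∫ ω in {ω | Y₁ ω = y ∧ Y₂ ω = y}, ℓ (f (X₁ ω) - f (X₂ ω)) ∂P)
      / (P {ω | Y₁ ω = y ∧ Y₂ ω = y}).toReal = c / 2 := by
  have hZ₁ : Measurable (fun ω => (X₁ ω, Y₁ ω)) := hX₁.prodMk hY₁
  have hZ₂ : Measurable (fun ω => (X₂ ω, Y₂ ω)) := hX₂.prodMk hY₂
  -- exchangeability
  have hex : IdentDistrib (fun ω => ((X₁ ω, Y₁ ω), (X₂ ω, Y₂ ω)))
      (fun ω => ((X₂ ω, Y₂ ω), (X₁ ω, Y₁ ω))) P P := by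
    refine ⟨(hZ₁.prodMk hZ₂).aemeasurable, (hZ₂.prodMk hZ₁).aemeasurable, ?_⟩
    rw [(indepFun_iff_map_prod_eq_prod_map_map hZ₁.aemeasurable hZ₂.aemeasurable).1 hindep,
      (indepFun_iff_map_prod_eq_prod_map_map hZ₂.aemeasurable hZ₁.aemeasurable).1 hindep.symm,
      hid.map_eq]
  set S : Set Ω := {ω | Y₁ ω = y ∧ Y₂ ω = y} with hSdef
  have hS₁ : MeasurableSet {ω | Y₁ ω = y} := hY₁ (measurableSet_singleton y)
  have hS₂ : MeasurableSet {ω | Y₂ ω = y} := hY₂ (measurableSet_singleton y)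
  have hS : MeasurableSet S := hS₁.inter hS₂
  let T : Set ((𝒳 × ℝ) × (𝒳 × ℝ)) := {p | p.1.2 = y ∧ p.2.2 = y}
  have hT : MeasurableSet T := by
    refine MeasurableSet.inter (s₁ := {p : (𝒳 × ℝ) × (𝒳 × ℝ) | p.1.2 = y})
      (s₂ := {p : (𝒳 × ℝ) × (𝒳 × ℝ) | p.2.2 = y}) ?_ ?_
    · exact measurable_fst.snd (measurableSet_singleton y)
    · exact measurable_snd.snd (measurableSet_singleton y)
  let u : (𝒳 × ℝ) × (𝒳 × ℝ) → ℝ := T.indicator (fun p => ℓ (f p.1.1 - f p.2.1))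
  have hu : Measurable u := by
    refine Measurable.indicator ?_ hT
    exact hℓ.comp ((hf.comp measurable_fst.fst).sub (hf.comp measurable_snd.fst))
  have hcomp := hex.comp hu
  have e₁ : (u ∘ fun ω => ((X₁ ω, Y₁ ω), (X₂ ω, Y₂ ω)))
      = S.indicator (fun ω => ℓ (f (X₁ ω) - f (X₂ ω))) := by
    ext ω
    simp [u, T, hSdef, Set.indicator_apply]
  have e₂ : (u ∘ fun ω => ((X₂ ω, Y₂ ω), (X₁ ω, Y₁ ω)))
      = S.indicator (fun ω => ℓ (f (X₂ ω) - f (X₁ ω))) := by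
    ext ω
    simp [u, T, hSdef, Set.indicator_apply, and_comm]
  rw [e₁, e₂] at hcomp
  have hint₂ : IntegrableOn (fun ω => ℓ (f (X₂ ω) - f (X₁ ω))) S P := by
    rw [← integrable_indicator_iff hS] at hint ⊢
    exact hcomp.integrable_iff.1 hint
  have hI : ∫ ω in S, ℓ (f (X₁ ω) - f (X₂ ω)) ∂P = ∫ ω in S, ℓ (f (X₂ ω) - f (X₁ ω)) ∂P := by
    rw [← integral_indicator hS, ← integral_indicator hS]
    exact hcomp.integral_eq
  have hae : ∀ᵐ ω ∂(P.restrict S),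
      ℓ (f (X₁ ω) - f (X₂ ω)) + ℓ (f (X₂ ω) - f (X₁ ω)) = c := by
    rw [ae_restrict_iff' hS]
    have h0 : ∀ᵐ ω ∂P, ω ∉ {ω | f (X₁ ω) = f (X₂ ω)} ∩ S := measure_eq_zero_iff_ae_notMem.1 hties
    filter_upwards [h0] with ω hω hωS
    have hne : f (X₁ ω) - f (X₂ ω) ≠ 0 := fun h => hω ⟨sub_eq_zero.1 h, hωS⟩
    simpa using hsym _ hne
  have hsum : ∫ ω in S, ℓ (f (X₁ ω) - f (X₂ ω)) ∂P + ∫ ω in S, ℓ (f (X₂ ω) - f (X₁ ω)) ∂P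
      = (P S).toReal * c := by
    rw [← integral_add hint hint₂, integral_congr_ae hae]
    simp [Measure.real]
  have hPS : P S ≠ 0 := by
    have h1 : P S = P {ω | Y₁ ω = y} * P {ω | Y₂ ω = y} :=
      (hindep.comp measurable_snd measurable_snd).measure_inter_preimage_eq_mul {y} {y}
        (measurableSet_singleton y) (measurableSet_singleton y)
    have h2 : P {ω | Y₁ ω = y} = P {ω | Y₂ ω = y} :=
      (hid.comp measurable_snd).measure_mem_eq (measurableSet_singleton y)
    rw [h1, ← h2]
    exact mul_ne_zero hpos.ne' hpos.ne'
  have hPS' : (P S).toReal ≠ 0 := ENNReal.toReal_ne_zero.2 ⟨hPS, measure_ne_top P S⟩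
  rw [div_eq_iff hPS']
  linarith
end

section
/- The logistic loss ℓ(α) = log(1 + exp(−α)) is not order-preserving for pointwise risks under class-conditional label noise: there exist a probability space, a random feature vector X, a {0,1}-valued random label Y, a noise level γ ∈ (1/2, 1], a {0,1}-valued random variable ε independent of (X, Y) with P(ε = 1) = γ defining the noisy label Ỹ = εY + (1−ε)(1−Y), and two measurable scorers f, g with all four risks L(f), L(g), L̃(f), L̃(g) finite, such that L̃(f) − L̃(g) ≠ (2γ−1)·(L(f) − L(g)). -/
open MeasureTheory ProbabilityTheory

/-- The logistic loss `ℓ(α) = log(1 + exp(-α))` is not order-preserving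
for pointwise risks under class-conditional label noise: there exist a probability
space, features `X`, a `{0,1}`-valued label `Y`, `γ ∈ (1/2, 1]`, noise `ε ⟂ (X,Y)`
with `P(ε=1) = γ` (defining `Ỹ = εY + (1-ε)(1-Y)`), and scorers `f, g` with all four
risks finite, such that `L̃(f) - L̃(g) ≠ (2γ-1)(L(f) - L(g))`. -/
theorem logistic_loss_not_order_preserving :
    ∃ (Ω : Type) (_ : MeasurableSpace Ω) (P : Measure Ω) (𝒳 : Type)
      (_ : MeasurableSpace 𝒳) (X : Ω → 𝒳) (Y e : Ω → ℝ) (γ : ℝ) (f g : 𝒳 → ℝ),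
      IsProbabilityMeasure P ∧
      Measurable X ∧ Measurable Y ∧ Measurable e ∧ Measurable f ∧ Measurable g ∧
      (∀ ω, Y ω = 0 ∨ Y ω = 1) ∧ (∀ ω, e ω = 0 ∨ e ω = 1) ∧
      γ ∈ Set.Ioc (1 / 2 : ℝ) 1 ∧
      IndepFun (fun ω => (X ω, Y ω)) e P ∧
      P {ω | e ω = 1} = ENNReal.ofReal γ ∧
      Integrable (fun ω => Real.log (1 + Real.exp (-(f (X ω) * (2 * Y ω - 1))))) P ∧
      Integrable (fun ω => Real.log (1 + Real.exp (-(g (X ω) * (2 * Y ω - 1))))) P ∧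
      Integrable (fun ω => Real.log (1 + Real.exp
        (-(f (X ω) * (2 * (e ω * Y ω + (1 - e ω) * (1 - Y ω)) - 1))))) P ∧
      Integrable (fun ω => Real.log (1 + Real.exp
        (-(g (X ω) * (2 * (e ω * Y ω + (1 - e ω) * (1 - Y ω)) - 1))))) P ∧
      (∫ ω, Real.log (1 + Real.exp
          (-(f (X ω) * (2 * (e ω * Y ω + (1 - e ω) * (1 - Y ω)) - 1)))) ∂P)
        - (∫ ω, Real.log (1 + Real.exp
            (-(g (X ω) * (2 * (e ω * Y ω + (1 - e ω) * (1 - Y ω)) - 1)))) ∂P)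
        ≠ (2 * γ - 1)
          * ((∫ ω, Real.log (1 + Real.exp (-(f (X ω) * (2 * Y ω - 1)))) ∂P)
              - (∫ ω, Real.log (1 + Real.exp (-(g (X ω) * (2 * Y ω - 1)))) ∂P)) := by
  classical
  let P : Measure Bool := ENNReal.ofReal (3/4) • Measure.dirac true
    + ENNReal.ofReal (1/4) • Measure.dirac false
  have hP : IsProbabilityMeasure P := ⟨by
    simp only [P, Measure.add_apply, Measure.smul_apply, measure_univ, smul_eq_mul, mul_one]
    rw [← ENNReal.ofReal_add (by norm_num) (by norm_num)]
    norm_num⟩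
  have hint : ∀ h : Bool → ℝ, ∫ ω, h ω ∂P = 3/4 * h true + 1/4 * h false := by
    intro h
    rw [integral_fintype (Integrable.of_finite)]
    simp [P, Measure.real]
    norm_num
  refine ⟨Bool, inferInstance, P, Unit, inferInstance, fun _ => (), fun _ => 1,
    fun b => if b then 1 else 0, 3/4, fun _ => Real.log 2, fun _ => 0, hP,
    measurable_const, measurable_const, measurable_of_finite _, measurable_const,
    measurable_const, fun _ => Or.inr rfl, ?_, ⟨by norm_num, by norm_num⟩,
    indepFun_const_left _ _, ?_, Integrable.of_finite, Integrable.of_finite,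
    Integrable.of_finite, Integrable.of_finite, ?_⟩
  · intro ω
    cases ω <;> simp
  · simp [P]
  · simp only [hint]
    have h1 : Real.exp (Real.log 2) = 2 := Real.exp_log (by norm_num)
    norm_num [Real.exp_neg, h1]
    intro h
    have h2 : Real.log (3/2) + Real.log 3 = Real.log 2 + Real.log 2 := by linarith
    rw [← Real.log_mul (by norm_num) (by norm_num),
      ← Real.log_mul (by norm_num) (by norm_num)] at h2
    have h3 := Real.log_injOn_pos (Set.mem_Ioi.2 (by norm_num)) (Set.mem_Ioi.2 (by norm_num)) h2
    norm_num at h3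
end

section
/- The exponential loss ℓ(α) = exp(−α) is not order-preserving for pointwise risks under class-conditional label noise: there exist a probability space, a random feature vector X, a {0,1}-valued random label Y, a noise level γ ∈ (1/2, 1], a {0,1}-valued random variable ε independent of (X, Y) with P(ε = 1) = γ defining the noisy label Ỹ = εY + (1−ε)(1−Y), and two measurable scorers f, g with all four risks L(f), L(g), L̃(f), L̃(g) finite, such that L̃(f) − L̃(g) ≠ (2γ−1)·(L(f) − L(g)). -/
open MeasureTheory ProbabilityTheory

/-- The exponential loss `ℓ(α) = exp(-α)` is not order-preserving for
pointwise risks under class-conditional label noise: there exist a probability space,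
features `X`, a `{0,1}`-valued label `Y`, `γ ∈ (1/2, 1]`, noise `ε ⟂ (X,Y)` with
`P(ε=1) = γ` (defining `Ỹ = εY + (1-ε)(1-Y)`), and scorers `f, g` with all four
risks finite, such that `L̃(f) - L̃(g) ≠ (2γ-1)(L(f) - L(g))`. -/
theorem exp_loss_not_order_preserving :
    ∃ (Ω : Type) (_ : MeasurableSpace Ω) (P : Measure Ω) (𝒳 : Type)
      (_ : MeasurableSpace 𝒳) (X : Ω → 𝒳) (Y e : Ω → ℝ) (γ : ℝ) (f g : 𝒳 → ℝ),
      IsProbabilityMeasure P ∧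
      Measurable X ∧ Measurable Y ∧ Measurable e ∧ Measurable f ∧ Measurable g ∧
      (∀ ω, Y ω = 0 ∨ Y ω = 1) ∧ (∀ ω, e ω = 0 ∨ e ω = 1) ∧
      γ ∈ Set.Ioc (1 / 2 : ℝ) 1 ∧
      IndepFun (fun ω => (X ω, Y ω)) e P ∧
      P {ω | e ω = 1} = ENNReal.ofReal γ ∧
      Integrable (fun ω => Real.exp (-(f (X ω) * (2 * Y ω - 1)))) P ∧
      Integrable (fun ω => Real.exp (-(g (X ω) * (2 * Y ω - 1)))) P ∧
      Integrable (fun ω => Real.exp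
        (-(f (X ω) * (2 * (e ω * Y ω + (1 - e ω) * (1 - Y ω)) - 1)))) P ∧
      Integrable (fun ω => Real.exp
        (-(g (X ω) * (2 * (e ω * Y ω + (1 - e ω) * (1 - Y ω)) - 1)))) P ∧
      (∫ ω, Real.exp (-(f (X ω) * (2 * (e ω * Y ω + (1 - e ω) * (1 - Y ω)) - 1))) ∂P)
        - (∫ ω, Real.exp (-(g (X ω) * (2 * (e ω * Y ω + (1 - e ω) * (1 - Y ω)) - 1))) ∂P)
        ≠ (2 * γ - 1)
          * ((∫ ω, Real.exp (-(f (X ω) * (2 * Y ω - 1))) ∂P)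
              - (∫ ω, Real.exp (-(g (X ω) * (2 * Y ω - 1))) ∂P)) := by
  let P : Measure Bool := ENNReal.ofReal (3 / 4) • Measure.dirac true
    + ENNReal.ofReal (1 / 4) • Measure.dirac false
  have hP : IsProbabilityMeasure P := by
    constructor
    simp only [P, Measure.add_apply, Measure.smul_apply, measure_univ, smul_eq_mul, mul_one]
    rw [← ENNReal.ofReal_add (by norm_num) (by norm_num)]
    norm_num
  have hint : ∀ h : Bool → ℝ, ∫ ω, h ω ∂P = 3 / 4 * h true + 1 / 4 * h false := by
    intro h
    rw [integral_add_measure (Integrable.of_finite.smul_measure ENNReal.ofReal_ne_top)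
      (Integrable.of_finite.smul_measure ENNReal.ofReal_ne_top),
      integral_smul_measure, integral_smul_measure, integral_dirac, integral_dirac,
      ENNReal.toReal_ofReal (by norm_num), ENNReal.toReal_ofReal (by norm_num)]
    simp only [smul_eq_mul]
  refine ⟨Bool, inferInstance, P, Unit, inferInstance, fun _ => (), fun _ => 1,
    fun b => if b then 1 else 0, 3 / 4, fun _ => 1, fun _ => 0, hP,
    measurable_const, measurable_const, measurable_of_finite _, measurable_const,
    measurable_const, fun _ => Or.inr rfl, ?_, by norm_num, indepFun_const_left _ _, ?_,
    Integrable.of_finite, Integrable.of_finite, Integrable.of_finite, Integrable.of_finite, ?_⟩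
  · intro b
    cases b <;> simp
  · simp [P]
  · rw [hint, hint, hint, hint]
    have h1 : Real.exp (-1) * Real.exp 1 = 1 := by
      rw [← Real.exp_add]
      simp
    have h2 : 1 + 1 < Real.exp 1 := Real.add_one_lt_exp (by norm_num)
    norm_num
    intro h
    nlinarith [Real.exp_pos (-1)]
end

section
/- The ranknet (pairwise logistic) loss ℓ(α) = log(1 + exp(−α)) applied to score differences is not order-preserving under class-conditional label noise: there exist i.i.d. triples (X₁, Y₁, ε₁), (X₂, Y₂, ε₂) with {0,1}-valued labels, P(Y₁ = 1) ∈ (0,1), a noise level γ ∈ (1/2, 1], each εᵢ independent of (Xᵢ, Yᵢ) with P(εᵢ = 1) = γ defining Ỹᵢ = εᵢYᵢ + (1−εᵢ)(1−Yᵢ), and two measurable scorers f, g with all four pairwise risks finite, such that L̃(f) − L̃(g) ≠ (2γ−1)·(L(f) − L(g)), where L(h) = E[ℓ(h(X₁) − h(X₂)) | Y₁ = 1, Y₂ = 0] and L̃(h) = E[ℓ(h(X₁) − h(X₂)) | Ỹ₁ = 1, Ỹ₂ = 0]. -/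
open MeasureTheory ProbabilityTheory

/-- The Bernoulli measure on `Bool` with real success weight `p`. -/
noncomputable def bernM (p : ℝ) : Measure Bool :=
  ENNReal.ofReal p • Measure.dirac true + ENNReal.ofReal (1 - p) • Measure.dirac false

lemma bernM_prob (p : ℝ) (h0 : 0 ≤ p) (h1 : p ≤ 1) : IsProbabilityMeasure (bernM p) := by
  constructor
  simp only [bernM, Measure.add_apply, Measure.smul_apply, measure_univ, smul_eq_mul, mul_one]
  rw [← ENNReal.ofReal_add h0 (by linarith)]
  simp

lemma bernM_true (p : ℝ) : bernM p {true} = ENNReal.ofReal p := by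
  simp [bernM]

lemma bernM_false (p : ℝ) : bernM p {false} = ENNReal.ofReal (1 - p) := by
  simp [bernM]

instance : IsProbabilityMeasure (bernM (1/2)) := bernM_prob _ (by norm_num) (by norm_num)

instance : IsProbabilityMeasure (bernM (3/4)) := bernM_prob _ (by norm_num) (by norm_num)

/-- Law of one pair (label, noise bit). -/
noncomputable def oneM : Measure (Bool × Bool) := (bernM (1/2)).prod (bernM (3/4))

instance : IsProbabilityMeasure oneM := by unfold oneM; infer_instance

/-- Law of two i.i.d. pairs. -/
noncomputable def twoM : Measure ((Bool × Bool) × (Bool × Bool)) := oneM.prod oneM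

instance : IsProbabilityMeasure twoM := by unfold twoM; infer_instance

/-- Numerical value of a bit. -/
def bv (b : Bool) : ℝ := if b then 1 else 0

/-- Weight of the noise bit. -/
noncomputable def wt (b : Bool) : ℝ := if b then 3/4 else 1/4

lemma twoM_real (a b c d : Bool) :
    twoM.real {((a, b), (c, d))} = (1/2 * wt b) * (1/2 * wt d) := by
  have h1 : ∀ a, (bernM (1/2)).real {a} = 1/2 := by
    intro a
    cases a
    · rw [measureReal_def, bernM_false, ENNReal.toReal_ofReal] <;> norm_num
    · rw [measureReal_def, bernM_true, ENNReal.toReal_ofReal]; norm_num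
  have h2 : ∀ a, (bernM (3/4)).real {a} = wt a := by
    intro a
    cases a
    · rw [measureReal_def, bernM_false, ENNReal.toReal_ofReal] <;> norm_num [wt]
    · rw [measureReal_def, bernM_true, ENNReal.toReal_ofReal] <;> norm_num [wt]
  have h3 : ∀ a b, oneM.real {(a, b)} = 1/2 * wt b := by
    intro a b
    rw [← h1 a, ← h2 b, ← Set.singleton_prod_singleton, oneM, measureReal_prod_prod]
  rw [← h3 a b, ← h3 c d, ← Set.singleton_prod_singleton, twoM, measureReal_prod_prod]

lemma twoM_int (s : Set ((Bool × Bool) × (Bool × Bool)))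
    (h : (Bool × Bool) × (Bool × Bool) → ℝ) :
    ∫ ω in s, h ω ∂twoM
      = ∑ a, ∑ b, ∑ c, ∑ d, (1/2 * wt b) * (1/2 * wt d) * s.indicator h ((a, b), (c, d)) := by
  rw [← integral_indicator (Set.toFinite s).measurableSet, integral_fintype Integrable.of_finite]
  simp only [Fintype.sum_prod_type, twoM_real, smul_eq_mul]

lemma twoM_toReal (s : Set ((Bool × Bool) × (Bool × Bool))) :
    (twoM s).toReal
      = ∑ a, ∑ b, ∑ c, ∑ d,
        (1/2 * wt b) * (1/2 * wt d) * s.indicator (fun _ => (1:ℝ)) ((a, b), (c, d)) := by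
  rw [← twoM_int]
  simp [measureReal_def]

lemma fst_map : twoM.map Prod.fst = oneM := by
  simp [twoM]

lemma snd_map : twoM.map Prod.snd = oneM := by
  simp [twoM]

lemma twoM_fst (s : Set (Bool × Bool)) : twoM {ω | ω.1 ∈ s} = oneM s := by
  rw [← fst_map, Measure.map_apply measurable_fst (Set.toFinite s).measurableSet]; rfl

lemma twoM_snd (s : Set (Bool × Bool)) : twoM {ω | ω.2 ∈ s} = oneM s := by
  rw [← snd_map, Measure.map_apply measurable_snd (Set.toFinite s).measurableSet]; rfl

lemma oneM_y : oneM {p | bv p.1 = 1} = ENNReal.ofReal (1/2) := by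
  have : {p : Bool × Bool | bv p.1 = 1} = {true} ×ˢ Set.univ := by
    ext ⟨a, b⟩; cases a <;> simp [bv]
  rw [this, oneM, Measure.prod_prod, bernM_true, measure_univ]; simp only [mul_one, one_mul]

lemma oneM_e : oneM {p | bv p.2 = 1} = ENNReal.ofReal (3/4) := by
  have : {p : Bool × Bool | bv p.2 = 1} = Set.univ ×ˢ {true} := by
    ext ⟨a, b⟩; cases b <;> simp [bv]
  rw [this, oneM, Measure.prod_prod, bernM_true, measure_univ]; simp only [mul_one, one_mul]

lemma oneM_indep : IndepFun (fun p : Bool × Bool => (p.1, bv p.1)) (fun p => bv p.2) oneM :=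
  indepFun_prod (μ := bernM (1/2)) (ν := bernM (3/4)) (X := fun a => (a, bv a)) (Y := bv)
    (measurable_of_finite _) (measurable_of_finite _)

lemma indep_comp {α β γ δ : Type} [MeasurableSpace α] [MeasurableSpace β] [MeasurableSpace γ]
    [MeasurableSpace δ] {μ : Measure α} {T : α → β} (hT : Measurable T) {F : β → γ} {G : β → δ}
    (hF : Measurable F) (hG : Measurable G)
    (h : IndepFun F G (μ.map T)) : IndepFun (fun a => F (T a)) (fun a => G (T a)) μ := by
  rw [indepFun_iff_measure_inter_preimage_eq_mul] at h ⊢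
  intro s t hs ht
  have := h s t hs ht
  rw [Measure.map_apply hT ((hF hs).inter (hG ht)), Measure.map_apply hT (hF hs),
    Measure.map_apply hT (hG ht)] at this
  exact this

/-- The ranknet (pairwise logistic) loss `ℓ(α) = log(1 + exp(-α))`
applied to score differences is not order-preserving under class-conditional label
noise: there exist i.i.d. triples `(X₁,Y₁,ε₁)`, `(X₂,Y₂,ε₂)` with `{0,1}`-valued
labels, `P(Y₁=1) ∈ (0,1)`, `γ ∈ (1/2, 1]`, `εᵢ ⟂ (Xᵢ,Yᵢ)`, `P(εᵢ=1) = γ`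
(defining `Ỹᵢ = εᵢYᵢ + (1-εᵢ)(1-Yᵢ)`), and scorers `f, g` with all four pairwise
risks finite, such that `L̃(f) - L̃(g) ≠ (2γ-1)(L(f) - L(g))`, where
`L(h) = E[ℓ(h(X₁)-h(X₂)) | Y₁=1, Y₂=0]` and `L̃(h) = E[ℓ(h(X₁)-h(X₂)) | Ỹ₁=1, Ỹ₂=0]`. -/
theorem ranknet_loss_not_order_preserving :
    ∃ (Ω : Type) (_ : MeasurableSpace Ω) (P : Measure Ω) (𝒳 : Type)
      (_ : MeasurableSpace 𝒳) (X₁ X₂ : Ω → 𝒳) (Y₁ Y₂ e₁ e₂ : Ω → ℝ) (γ : ℝ)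
      (f g : 𝒳 → ℝ),
      IsProbabilityMeasure P ∧
      Measurable X₁ ∧ Measurable X₂ ∧ Measurable Y₁ ∧ Measurable Y₂ ∧
      Measurable e₁ ∧ Measurable e₂ ∧ Measurable f ∧ Measurable g ∧
      (∀ ω, Y₁ ω = 0 ∨ Y₁ ω = 1) ∧ (∀ ω, Y₂ ω = 0 ∨ Y₂ ω = 1) ∧
      (∀ ω, e₁ ω = 0 ∨ e₁ ω = 1) ∧ (∀ ω, e₂ ω = 0 ∨ e₂ ω = 1) ∧
      IndepFun (fun ω => (X₁ ω, Y₁ ω, e₁ ω)) (fun ω => (X₂ ω, Y₂ ω, e₂ ω)) P ∧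
      IdentDistrib (fun ω => (X₁ ω, Y₁ ω, e₁ ω)) (fun ω => (X₂ ω, Y₂ ω, e₂ ω)) P P ∧
      0 < P {ω | Y₁ ω = 1} ∧ P {ω | Y₁ ω = 1} < 1 ∧
      γ ∈ Set.Ioc (1 / 2 : ℝ) 1 ∧
      IndepFun (fun ω => (X₁ ω, Y₁ ω)) e₁ P ∧
      IndepFun (fun ω => (X₂ ω, Y₂ ω)) e₂ P ∧
      P {ω | e₁ ω = 1} = ENNReal.ofReal γ ∧
      P {ω | e₂ ω = 1} = ENNReal.ofReal γ ∧
      IntegrableOn (fun ω => Real.log (1 + Real.exp (-(f (X₁ ω) - f (X₂ ω)))))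
        {ω | Y₁ ω = 1 ∧ Y₂ ω = 0} P ∧
      IntegrableOn (fun ω => Real.log (1 + Real.exp (-(g (X₁ ω) - g (X₂ ω)))))
        {ω | Y₁ ω = 1 ∧ Y₂ ω = 0} P ∧
      IntegrableOn (fun ω => Real.log (1 + Real.exp (-(f (X₁ ω) - f (X₂ ω)))))
        {ω | e₁ ω * Y₁ ω + (1 - e₁ ω) * (1 - Y₁ ω) = 1
            ∧ e₂ ω * Y₂ ω + (1 - e₂ ω) * (1 - Y₂ ω) = 0} P ∧
      IntegrableOn (fun ω => Real.log (1 + Real.exp (-(g (X₁ ω) - g (X₂ ω)))))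
        {ω | e₁ ω * Y₁ ω + (1 - e₁ ω) * (1 - Y₁ ω) = 1
            ∧ e₂ ω * Y₂ ω + (1 - e₂ ω) * (1 - Y₂ ω) = 0} P ∧
      (∫ ω in {ω | e₁ ω * Y₁ ω + (1 - e₁ ω) * (1 - Y₁ ω) = 1
                  ∧ e₂ ω * Y₂ ω + (1 - e₂ ω) * (1 - Y₂ ω) = 0},
          Real.log (1 + Real.exp (-(f (X₁ ω) - f (X₂ ω)))) ∂P)
        / (P {ω | e₁ ω * Y₁ ω + (1 - e₁ ω) * (1 - Y₁ ω) = 1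
                  ∧ e₂ ω * Y₂ ω + (1 - e₂ ω) * (1 - Y₂ ω) = 0}).toReal
      - (∫ ω in {ω | e₁ ω * Y₁ ω + (1 - e₁ ω) * (1 - Y₁ ω) = 1
                  ∧ e₂ ω * Y₂ ω + (1 - e₂ ω) * (1 - Y₂ ω) = 0},
          Real.log (1 + Real.exp (-(g (X₁ ω) - g (X₂ ω)))) ∂P)
        / (P {ω | e₁ ω * Y₁ ω + (1 - e₁ ω) * (1 - Y₁ ω) = 1
                  ∧ e₂ ω * Y₂ ω + (1 - e₂ ω) * (1 - Y₂ ω) = 0}).toReal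
      ≠ (2 * γ - 1)
        * ((∫ ω in {ω | Y₁ ω = 1 ∧ Y₂ ω = 0},
              Real.log (1 + Real.exp (-(f (X₁ ω) - f (X₂ ω)))) ∂P)
              / (P {ω | Y₁ ω = 1 ∧ Y₂ ω = 0}).toReal
            - (∫ ω in {ω | Y₁ ω = 1 ∧ Y₂ ω = 0},
                Real.log (1 + Real.exp (-(g (X₁ ω) - g (X₂ ω)))) ∂P)
              / (P {ω | Y₁ ω = 1 ∧ Y₂ ω = 0}).toReal) := by
  refine ⟨(Bool × Bool) × (Bool × Bool), inferInstance, twoM, Bool, inferInstance,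
    fun ω => ω.1.1, fun ω => ω.2.1, fun ω => bv ω.1.1, fun ω => bv ω.2.1,
    fun ω => bv ω.1.2, fun ω => bv ω.2.2, 3/4,
    fun b => if b then -Real.log 2 else 0, fun _ => 0,
    inferInstance, measurable_of_finite _, measurable_of_finite _, measurable_of_finite _,
    measurable_of_finite _, measurable_of_finite _, measurable_of_finite _,
    measurable_of_finite _, measurable_of_finite _,
    ?_, ?_, ?_, ?_, ?_, ?_, ?_, ?_, ?_, ?_, ?_, ?_, ?_,
    Integrable.of_finite, Integrable.of_finite, Integrable.of_finite, Integrable.of_finite, ?_⟩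
  · intro ω; cases ω.1.1 <;> simp [bv]
  · intro ω; cases ω.2.1 <;> simp [bv]
  · intro ω; cases ω.1.2 <;> simp [bv]
  · intro ω; cases ω.2.2 <;> simp [bv]
  · exact indepFun_prod (μ := oneM) (ν := oneM) (X := fun p => (p.1, bv p.1, bv p.2))
      (Y := fun p => (p.1, bv p.1, bv p.2)) (measurable_of_finite _) (measurable_of_finite _)
  · refine ⟨(measurable_of_finite _).aemeasurable, (measurable_of_finite _).aemeasurable, ?_⟩
    have hF : Measurable (fun p : Bool × Bool => (p.1, bv p.1, bv p.2)) := measurable_of_finite _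
    have h1 := Measure.map_map (μ := twoM) hF measurable_fst
    have h2 := Measure.map_map (μ := twoM) hF measurable_snd
    rw [fst_map] at h1
    rw [snd_map] at h2
    exact h1.symm.trans h2
  · rw [show {ω : (Bool × Bool) × (Bool × Bool) | bv ω.1.1 = 1}
      = {ω | ω.1 ∈ {p : Bool × Bool | bv p.1 = 1}} from rfl, twoM_fst, oneM_y]
    simp
  · rw [show {ω : (Bool × Bool) × (Bool × Bool) | bv ω.1.1 = 1}
      = {ω | ω.1 ∈ {p : Bool × Bool | bv p.1 = 1}} from rfl, twoM_fst, oneM_y]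
    rw [ENNReal.ofReal_lt_one]; norm_num
  · constructor <;> norm_num
  · exact indep_comp (T := Prod.fst) measurable_fst (measurable_of_finite _)
      (measurable_of_finite _) (by rw [fst_map]; exact oneM_indep)
  · exact indep_comp (T := Prod.snd) measurable_snd (measurable_of_finite _)
      (measurable_of_finite _) (by rw [snd_map]; exact oneM_indep)
  · exact (twoM_fst {p | bv p.2 = 1}).trans oneM_e
  · exact (twoM_snd {p | bv p.2 = 1}).trans oneM_e
  · have e2 : Real.exp (Real.log 2) = 2 := Real.exp_log (by norm_num)
    have e3 : Real.exp (-Real.log 2) = 1/2 := by rw [Real.exp_neg, e2]; norm_num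
    have l4 : Real.log (1 + 1/2) = Real.log 3 - Real.log 2 := by
      rw [← Real.log_div (by norm_num) (by norm_num)]; norm_num
    have key : 3 * Real.log 2 < 2 * Real.log 3 := by
      have h := Real.log_lt_log (x := (2:ℝ)^3) (y := (3:ℝ)^2) (by norm_num) (by norm_num)
      rw [Real.log_pow, Real.log_pow] at h
      exact_mod_cast h
    have l3 : Real.log (1 + 2) = Real.log 3 := by norm_num
    have l2 : Real.log (1 + 1) = Real.log 2 := by norm_num
    simp only [twoM_int, twoM_toReal, Fintype.sum_bool, Set.indicator, Set.mem_ofPred_eq, bv, wt,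
      if_true, Bool.false_eq_true, if_false, mul_one, mul_zero, sub_zero, sub_self, zero_sub,
      neg_neg, add_zero, zero_add, neg_zero, Real.exp_zero, e2, e3, l4, l3, l2, one_ne_zero,
      zero_ne_one, and_true, and_false]
    intro h
    norm_num at h
    linarith
end

section
/- Let F be a nonempty set of scoring functions, γ ∈ (1/2, 1], b ∈ ℝ, and let L, L̃ : F → ℝ satisfy L̃(f) = (2γ−1)·L(f) + b for all f ∈ F, with L bounded below on F. Let (Ω, P) be a probability space, and for each n let L̃_n : Ω × F → ℝ be the noisy empirical risk and f_n : Ω → F a minimizer of the noisy empirical risk: L̃_n(ω, f_n(ω)) = inf_{f∈F} L̃_n(ω, f) for all ω. If the uniform deviations converge in probability, i.e., sup_{f∈F} |L̃_n(·, f) − L̃(f)| → 0 in probability as n → ∞ (assuming these suprema are measurable), then the clean excess risk of the selected function converges in probability: L(f_n) − inf_{f∈F} L(f) → 0 in probability. That is, empirical risk minimization on noisy data is consistent for the clean risk, with the convergence rate scaled by the constant factor 2γ−1. -/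
open MeasureTheory Filter

/-- If the noisy risk `L̃` is an affine transform of the clean risk `L`
with slope `2γ-1 > 0` (order preservation), `L` is bounded below, `f_n(ω)` minimizes
the noisy empirical risk `L̃_n(ω, ·)` for every `ω`, and the uniform deviations
`sup_{f∈F} |L̃_n(·, f) - L̃(f)|` converge to `0` in probability (these suprema being
measurable, expressed via the events `{ω | ∃ f, ε < |L̃_n(ω, f) - L̃(f)|}`), then the
clean excess risk `L(f_n) - inf L` converges to `0` in probability: noisy ERM is
consistent for the clean risk. -/
theorem noisy_erm_consistent
    {F : Type*} [Nonempty F] (L Lt : F → ℝ) (γ b : ℝ)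
    (hγ : γ ∈ Set.Ioc (1 / 2 : ℝ) 1)
    (haff : ∀ f, Lt f = (2 * γ - 1) * L f + b)
    (hbdd : BddBelow (Set.range L))
    {Ω : Type*} [MeasurableSpace Ω] (P : Measure Ω) [IsProbabilityMeasure P]
    (Ln : ℕ → Ω → F → ℝ) (fn : ℕ → Ω → F)
    (hmin : ∀ n ω f, Ln n ω (fn n ω) ≤ Ln n ω f)
    (hmeas : ∀ n (t : ℝ), MeasurableSet {ω | ∃ f, t < |Ln n ω f - Lt f|})
    (hconv : ∀ ε > (0 : ℝ),
      Tendsto (fun n => P {ω | ∃ f, ε < |Ln n ω f - Lt f|}) atTop (nhds 0)) :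
    ∀ ε > (0 : ℝ),
      Tendsto (fun n => P {ω | ε < L (fn n ω) - ⨅ f, L f}) atTop (nhds 0) := by
  intro ε hε
  have hc : 0 < 2 * γ - 1 := by linarith [hγ.1]
  have hδ : 0 < (2 * γ - 1) * ε / 2 := by positivity
  refine tendsto_of_tendsto_of_tendsto_of_le_of_le tendsto_const_nhds
    (hconv _ hδ) (fun n => zero_le) (fun n => measure_mono ?_)
  intro ω hω
  simp only [Set.mem_setOf_eq] at hω ⊢
  by_contra hno
  push Not at hno
  have key : L (fn n ω) - ε ≤ ⨅ f, L f := by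
    refine le_ciInf fun f => ?_
    have h1 := (abs_le.mp (hno (fn n ω))).1
    have h2 := (abs_le.mp (hno f)).2
    have h3 := hmin n ω f
    rw [haff] at h1 h2
    have h4 : (2 * γ - 1) * (L (fn n ω) - ε) ≤ (2 * γ - 1) * L f := by linarith
    exact le_of_mul_le_mul_left h4 hc
  linarith
end
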